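/- Let p be an odd prime, q = p^{2e}, and let n satisfy 1 ≤ n ≤ q and p | n. The number of n-element subsets {x_1,...,x_n} of F_q satisfying x_1 + ... + x_n = 0 and x_1^2 + ... + x_n^2 = 0 equals (1/q^2) C(q,n) + ((q-1)/q^2) C(q/p, n/p) + ((q-1)/(2q)) (α(n) + (-1)^n β(n)), where α(n) = Σ_{i+pj=n, 0≤i≤√q} C(√q, i) C((q-√q)/p, j) and β(n) = Σ_{i+pj=n, i≥0} (-1)^j C(√q-1+i, √q-1) C((q+√q)/p, j). -/

import Mathlib

/-!
Let `ψ` be the composition of the trace `F → ZMod p` with a nontrivial additive character. By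
orthogonality, `q ^ 2` times the number of subsets is the sum over all `a` and `b` of the
coefficient of `X ^ n` in `∏ x, (1 + ψ (a x + b x ^ 2) X)`. If `b ≠ 0`, completing the square
removes `a`: the constant it creates contributes `ψ (n c) = 1`, because `p ∣ n`.

As `q` is an even power of `p`, every element of `ZMod p` is a square in `F`, so the traces of
`b x ^ 2` are equidistributed over the nonzero classes. Since `∏ c, (1 + ζ ^ c X) = 1 + X ^ p` for a
primitive `p`-th root of unity `ζ`, the product is then `(1 + X) ^ σ (1 + X ^ p) ^ ((q - σ) / p)`
with `σ = ∑ x, ψ (b x ^ 2)`. Finally `σ = ±√q`, each sign occurring for half of the `b ≠ 0`; the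
coefficients for the two signs are `α(n)` and `(-1) ^ n β(n)`.
-/

open Finset PowerSeries

section FiberCounting

variable {ι α M : Type*} [Fintype ι] [Fintype α] [DecidableEq α]

@[to_additive]
lemma prod_comp_mul_pow_of_card_fiber_eq [CommMonoid M] (f : ι → α) (g : α → M) (a₀ : α) {m : ℕ}
    (hf : ∀ a ≠ a₀, #{i | f i = a} = m) :
    (∏ i, g (f i)) * g a₀ ^ m = g a₀ ^ #{i | f i = a₀} * (∏ a, g a) ^ m := by
  have fiberwise : ∏ i, g (f i) = ∏ a, g a ^ #{i | f i = a} := by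
    simp_rw [← prod_fiberwise' univ f, prod_const]
  have off_center : ∏ a ∈ {a₀}ᶜ, g a ^ #{i | f i = a} = ∏ a ∈ {a₀}ᶜ, g a ^ m :=
    prod_congr rfl fun a ha ↦ by rw [hf a (by simpa using ha)]
  rw [fiberwise, Fintype.prod_eq_mul_prod_compl a₀, Fintype.prod_eq_mul_prod_compl a₀ g,
    off_center, prod_pow, mul_pow, mul_assoc, mul_comm (g a₀ ^ m)]

lemma card_add_eq_of_card_fiber_eq (f : ι → α) (a₀ : α) {m : ℕ}
    (hf : ∀ a ≠ a₀, #{i | f i = a} = m) :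
    Fintype.card ι + m = #{i | f i = a₀} + Fintype.card α * m := by
  simpa [mul_comm] using sum_comp_add_nsmul_of_card_fiber_eq f (fun _ ↦ (1 : ℕ)) a₀ hf

end FiberCounting

lemma prod_add_zmodChar_mul {n : ℕ} [NeZero n] (hn : Odd n) {R : Type*} [CommRing R] [IsDomain R]
    {ψ : AddChar (ZMod n) R} (hψ : ψ.IsPrimitive) (x y : R) :
    ∏ c, (x + ψ c * y) = x ^ n + y ^ n := by
  classical
  have ψ_injective : Function.Injective ψ := fun a b hab ↦ by
    rw [← sub_eq_zero, ← hψ.zmod_char_eq_one_iff, sub_eq_add_neg, AddChar.map_add_eq_mul, hab,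
      ← AddChar.map_add_eq_mul, add_neg_cancel, AddChar.map_zero_eq_one]
  have primitive_root : IsPrimitiveRoot (ψ 1) n := by
    refine .mk_of_lt _ (NeZero.pos n) ?_ fun l hl hln ↦ ?_
    all_goals rw [← AddChar.map_nsmul_eq_pow, nsmul_one]
    · simp
    · rw [ne_eq, hψ.zmod_char_eq_one_iff, ZMod.natCast_eq_zero_iff]
      exact Nat.not_dvd_of_pos_of_lt hl hln
  have roots_eq : univ.image ψ = Polynomial.nthRootsFinset n (1 : R) := by
    refine eq_of_subset_of_card_le (fun z hz ↦ ?_) ?_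
    · obtain ⟨c, -, rfl⟩ := mem_image.1 hz
      rw [Polynomial.mem_nthRootsFinset (NeZero.pos n), ← AddChar.map_nsmul_eq_pow]
      simp
    · rw [primitive_root.card_nthRootsFinset, card_image_of_injective _ ψ_injective, card_univ,
        ZMod.card]
  rw [primitive_root.pow_add_pow_eq_prod_add_mul x y hn, ← roots_eq,
    prod_image ψ_injective.injOn]

section SubsetSumSeries

variable {ι A R : Type*} [Fintype ι] [AddCommMonoid A] [CommSemiring R]

/-- The generating function `∏ i, (1 + ψ (f i) X)` of the sums of the values `ψ (∑ i ∈ S, f i)`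
over the subsets `S` of a given size. -/
noncomputable def subsetSumSeries (ψ : AddChar A R) (f : ι → A) : R⟦X⟧ :=
  ∏ i, (1 + C (ψ (f i)) * X)

lemma subsetSumSeries_comp_equiv (ψ : AddChar A R) (f : ι → A) (σ : ι ≃ ι) :
    subsetSumSeries ψ (f ∘ σ) = subsetSumSeries ψ f :=
  σ.prod_comp fun i ↦ 1 + C (ψ (f i)) * X

lemma coeff_subsetSumSeries (ψ : AddChar A R) (f : ι → A) (n : ℕ) :
    coeff n (subsetSumSeries ψ f) = ∑ S ∈ powersetCard n univ, ψ (∑ i ∈ S, f i) := by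
  classical
  have coeff_term (S : Finset ι) : coeff n (∏ i ∈ S, (C (ψ (f i)) * X)) =
      if #S = n then ψ (∑ i ∈ S, f i) else 0 := by
    have map_sum : ψ (∑ i ∈ S, f i) = ∏ i ∈ S, ψ (f i) := map_prod ψ.toMonoidHom _ S
    simp [prod_mul_distrib, ← map_prod, coeff_X_pow, map_sum, eq_comm]
  rw [subsetSumSeries, prod_one_add, map_sum, sum_congr rfl fun S _ ↦ coeff_term S, ← sum_filter,
    powersetCard_eq_filter]

lemma coeff_subsetSumSeries_zero (ψ : AddChar A R) (n : ℕ) :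
    coeff n (subsetSumSeries ψ fun _ : ι ↦ 0) = (Fintype.card ι).choose n := by
  simp [coeff_subsetSumSeries]

lemma coeff_subsetSumSeries_add_const (ψ : AddChar A R) (f : ι → A) (c : A) (n : ℕ) :
    coeff n (subsetSumSeries ψ fun i ↦ f i + c) =
      coeff n (subsetSumSeries ψ f) * ψ (n • c) := by
  simp_rw [coeff_subsetSumSeries, sum_mul]
  refine sum_congr rfl fun S hS ↦ ?_
  rw [sum_add_distrib, sum_const, (mem_powersetCard.1 hS).2, AddChar.map_add_eq_mul]

end SubsetSumSeries

section ExpSumSeries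

variable {R : Type*} [CommRing R]

/-- The power series `(1 + X) ^ σ * (1 + X ^ p) ^ ((N - σ) / p)`, with a possibly negative exponent
`σ`. It is the value of `subsetSumSeries ψ f` for `N` arguments whose images `f i` in `ZMod p` are
equidistributed over the nonzero classes, `σ` being the exponential sum `∑ i, ψ (f i)`; then `p`
divides `N - σ ≥ 0`, and neither the division nor `Int.toNat` loses anything. -/
noncomputable def expSumSeries (R : Type*) [CommRing R] (p N : ℕ) (σ : ℤ) : R⟦X⟧ :=
  binomialSeries R σ * (1 + X ^ p) ^ ((N - σ) / p).toNat

lemma subsetSumSeries_eq_expSumSeries {ι : Type*} [Fintype ι] {n : ℕ} [NeZero n]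
    [Nontrivial (ZMod n)] (hn : Odd n) [IsDomain R] [CharZero R] {ψ : AddChar (ZMod n) R}
    (hψ : ψ.IsPrimitive) (f : ι → ZMod n) {m : ℕ} (hf : ∀ c ≠ 0, #{i | f i = c} = m) {σ : ℤ}
    (hσ : ∑ i, ψ (f i) = σ) :
    subsetSumSeries ψ f = expSumSeries R n (Fintype.card ι) σ := by
  have hψ_one : ψ ≠ 1 := by simpa [AddChar.mulShift_one] using hψ one_ne_zero
  have card_zero_fiber : (#{i | f i = 0} : ℤ) = σ + m := by
    have := sum_comp_add_nsmul_of_card_fiber_eq f ψ 0 hf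
    simp only [hσ, AddChar.map_zero_eq_one, nsmul_one, AddChar.sum_eq_zero_of_ne_one hψ_one,
      nsmul_zero, add_zero] at this
    exact_mod_cast this.symm
  have exponent : ((Fintype.card ι - σ) / n).toNat = m := by
    have : (Fintype.card ι + m : ℤ) = #{i | f i = 0} + n * m := by
      exact_mod_cast ZMod.card n ▸ card_add_eq_of_card_fiber_eq f 0 hf
    rw [show Fintype.card ι - σ = n * m by linarith,
      Int.mul_ediv_cancel_left _ (mod_cast NeZero.ne n), Int.toNat_natCast]
  have prod_linear_factors : ∏ c, (1 + C (ψ c) * X) = (1 + X ^ n : R⟦X⟧) := by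
    have C_ψ_primitive : ((C : R →+* R⟦X⟧).toMonoidHom.compAddChar ψ).IsPrimitive :=
      AddChar.zmod_char_primitive_of_eq_one_only_at_zero _ _ fun c hc ↦
        (hψ.zmod_char_eq_one_iff _ c).1 (C_injective (by simpa using hc))
    simpa using prod_add_zmodChar_mul hn C_ψ_primitive 1 X
  have prod_eq : subsetSumSeries ψ f * (1 + X) ^ m =
      (1 + X) ^ #{i | f i = 0} * (1 + X ^ n) ^ m := by
    have fiberwise := prod_comp_mul_pow_of_card_fiber_eq f (fun c ↦ 1 + C (ψ c) * X) 0 hf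
    rwa [prod_linear_factors, AddChar.map_zero_eq_one, map_one, one_mul] at fiberwise
  have one_add_X_ne_zero : (1 + X : R⟦X⟧) ≠ 0 := fun h ↦ by simpa using congrArg (coeff 0) h
  refine mul_right_cancel₀ (pow_ne_zero m one_add_X_ne_zero) ?_
  rw [prod_eq, expSumSeries, exponent, ← binomialSeries_nat (R := ℤ), card_zero_fiber,
    binomialSeries_add, binomialSeries_nat]
  ring

lemma coeff_one_add_X_pow_pow {p : ℕ} (hp : 0 < p) (m n : ℕ) :
    coeff n ((1 + X ^ p : R⟦X⟧) ^ m) = if p ∣ n then (m.choose (n / p) : R) else 0 := by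
  have expand_eq : (1 + X ^ p : R⟦X⟧) ^ m = expand p hp.ne' (binomialSeries R (m : ℤ)) := by
    simp [binomialSeries_nat]
  simp [expand_eq, -binomialSeries_nat, coeff_expand, Ring.choose_natCast]

lemma coeff_mul_one_add_X_pow_pow (f : R⟦X⟧) {p : ℕ} (hp : 0 < p) (m n : ℕ) :
    coeff n (f * (1 + X ^ p) ^ m) =
      ∑ ij ∈ range (n + 1) ×ˢ range (n + 1) with ij.1 + p * ij.2 = n,
        coeff ij.1 f * m.choose ij.2 := by
  simp_rw [coeff_mul, coeff_one_add_X_pow_pow hp]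
  simp_rw [mul_ite, mul_zero]
  rw [← sum_filter]
  symm
  refine sum_bij' (fun ij _ ↦ (ij.1, p * ij.2)) (fun ij _ ↦ (ij.1, ij.2 / p)) ?_ ?_ ?_ ?_ ?_
  · simp +contextual
  · rintro ⟨i, k⟩ h
    obtain ⟨h, j, rfl⟩ := by simpa using h
    have : j ≤ p * j := Nat.le_mul_of_pos_left j hp
    simp [hp]
    omega
  · simp [hp]
  · simp +contextual [Nat.mul_div_cancel']
  · simp [hp]

lemma coeff_expSumSeries_zero_of_dvd {p n : ℕ} (hp : 0 < p) (hn : p ∣ n) (N : ℕ) :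
    coeff n (expSumSeries R p N 0) = (N / p).choose (n / p) := by
  have exponent : (((N : ℤ) - 0) / p).toNat = N / p := by
    rw [sub_zero, ← Int.natCast_div, Int.toNat_natCast]
  rw [expSumSeries, exponent, binomialSeries_zero, one_mul, coeff_one_add_X_pow_pow hp, if_pos hn]

lemma coeff_expSumSeries_natCast {p N s : ℕ} (hp : 0 < p) (hs : s ≤ N) (n : ℕ) :
    coeff n (expSumSeries R p N s) =
      ∑ ij ∈ range (n + 1) ×ˢ range (n + 1) with ij.1 + p * ij.2 = n ∧ ij.1 ≤ s,
        (s.choose ij.1 : R) * ((N - s) / p).choose ij.2 := by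
  have exponent : (((N : ℤ) - s) / p).toNat = (N - s) / p := by
    rw [← Nat.cast_sub hs, ← Int.natCast_div, Int.toNat_natCast]
  have coeff_pow (i : ℕ) : coeff i (binomialSeries R (s : ℤ)) = s.choose i := by
    simp [-binomialSeries_nat, Ring.choose_natCast]
  rw [expSumSeries, exponent, coeff_mul_one_add_X_pow_pow _ hp, ← filter_filter,
    sum_filter fun ij : ℕ × ℕ ↦ ij.1 ≤ s]
  refine sum_congr rfl fun ij _ ↦ ?_
  split_ifs with h
  · rw [coeff_pow]
  · rw [coeff_pow, Nat.choose_eq_zero_of_lt (not_le.1 h), Nat.cast_zero, zero_mul]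

lemma coeff_binomialSeries_neg {s : ℕ} (hs : 0 < s) (i : ℕ) :
    coeff i (binomialSeries R (-s : ℤ)) = (-1) ^ i * ((s - 1 + i).choose (s - 1) : R) := by
  rw [← rescale_neg_one_invOneSubPow, coeff_rescale,
    invOneSubPow_val_eq_mk_sub_one_add_choose_of_pos _ _ hs, coeff_mk]

lemma coeff_expSumSeries_neg {p N s : ℕ} (hp : Odd p) (hs : 0 < s) (n : ℕ) :
    coeff n (expSumSeries R p N (-s)) =
      (-1) ^ n * ∑ ij ∈ range (n + 1) ×ˢ range (n + 1) with ij.1 + p * ij.2 = n,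
        (-1) ^ ij.2 * ((s - 1 + ij.1).choose (s - 1) : R) * ((N + s) / p).choose ij.2 := by
  have exponent : (((N : ℤ) - -s) / p).toNat = (N + s) / p := by
    rw [sub_neg_eq_add]; norm_cast
  rw [expSumSeries, exponent, coeff_mul_one_add_X_pow_pow _ hp.pos, mul_sum]
  refine sum_congr rfl fun ij hij ↦ ?_
  have sign : (-1 : R) ^ n * (-1) ^ ij.2 = (-1) ^ ij.1 := by
    rw [← (mem_filter.1 hij).2, pow_add, pow_mul, hp.neg_one_pow, mul_assoc, ← mul_pow]
    simp
  rw [coeff_binomialSeries_neg hs, ← sign]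
  ring

end ExpSumSeries

section QuadraticCharacter

variable {F : Type*} [Field F] [Fintype F] [DecidableEq F]

lemma two_nsmul_sum_comp_quadraticChar {M : Type*} [AddCommMonoid M] (hF : ringChar F ≠ 2)
    (h : ℤ → M) :
    2 • ∑ b ∈ {(0 : F)}ᶜ, h (quadraticChar F b) = (Fintype.card F - 1) • (h 1 + h (-1)) := by
  obtain ⟨u, hu⟩ := quadraticChar_exists_neg_one hF
  have hu₀ : u ≠ 0 := by rintro rfl; simp at hu
  have sum_neg : ∑ b ∈ {(0 : F)}ᶜ, h (quadraticChar F b) =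
      ∑ b ∈ {(0 : F)}ᶜ, h (-quadraticChar F b) :=
    (sum_equiv (Equiv.mulLeft₀ u hu₀) (by simp [hu₀]) fun b _ ↦ by
      rw [Equiv.mulLeft₀_apply, map_mul, hu, neg_one_mul]).symm
  have sum_pair (b : F) (hb : b ∈ ({0}ᶜ : Finset F)) :
      h (quadraticChar F b) + h (-quadraticChar F b) = h 1 + h (-1) := by
    rcases quadraticChar_dichotomy (show b ≠ 0 by simpa using hb) with hb | hb
    · rw [hb]
    · rw [hb, neg_neg, add_comm]
  rw [two_nsmul]
  nth_rw 2 [sum_neg]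
  rw [← sum_add_distrib, sum_congr rfl sum_pair, sum_const, card_compl, card_singleton]

variable {R : Type*} [CommRing R]

lemma sum_comp_sq_eq_sum_quadraticChar (hF : ringChar F ≠ 2) (h : F → R) :
    ∑ x, h (x ^ 2) = ∑ y, (quadraticChar F y + 1) * h y := by
  rw [← sum_fiberwise' univ (· ^ 2)]
  refine sum_congr rfl fun y _ ↦ ?_
  have card_sqrts : (#{x : F | x ^ 2 = y} : ℤ) = quadraticChar F y + 1 := by
    rw [← quadraticChar_card_sqrts hF y]
    congr 2
    ext
    simp
  rw [sum_const, nsmul_eq_mul]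
  congr 1
  exact_mod_cast congrArg (Int.cast : ℤ → R) card_sqrts

/-- The quadratic character of `F` with values in `R`. -/
abbrev quadraticCharIn (F R : Type*) [Field F] [Fintype F] [DecidableEq F] [CommRing R] :
    MulChar F R :=
  (quadraticChar F).ringHomComp (Int.castRingHom R)

variable [IsDomain R] {ψ : AddChar F R}

lemma sum_addChar_mul_sq (hF : ringChar F ≠ 2) (hψ : ψ.IsPrimitive) {b : F} (hb : b ≠ 0) :
    ∑ x, ψ (b * x ^ 2) = quadraticChar F b * gaussSum (quadraticCharIn F R) ψ := by
  have sum_ψ : ∑ y, ψ (b * y) = 0 := by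
    simpa [mul_comm b, hb] using AddChar.sum_mulShift b hψ
  have shift := gaussSum_mulShift_eq (quadraticCharIn F R) ψ (Units.mk0 b hb)
  rw [((quadraticChar_isQuadratic F).comp _).inv] at shift
  calc ∑ x, ψ (b * x ^ 2)
    _ = ∑ y, (quadraticChar F y + 1) * ψ (b * y) :=
      sum_comp_sq_eq_sum_quadraticChar hF fun y ↦ ψ (b * y)
    _ = gaussSum (quadraticCharIn F R) (ψ.mulShift b) := by
      simp_rw [add_mul, one_mul, sum_add_distrib, sum_ψ, add_zero]
      rfl
    _ = quadraticChar F b * gaussSum (quadraticCharIn F R) ψ := shift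

lemma gaussSum_quadraticCharIn_eq_or_eq_neg [CharZero R] (hF : ringChar F ≠ 2)
    (hψ : ψ.IsPrimitive) (hneg : IsSquare (-1 : F)) {s : ℕ} (hs : Fintype.card F = s ^ 2) :
    gaussSum (quadraticCharIn F R) ψ = s ∨ gaussSum (quadraticCharIn F R) ψ = -s := by
  have ne_one : quadraticCharIn F R ≠ 1 :=
    (MulChar.ringHomComp_ne_one_iff Int.cast_injective).2 (quadraticChar_ne_one hF)
  have map_neg_one : quadraticCharIn F R (-1) = 1 := by
    rw [MulChar.ringHomComp_apply,
      (quadraticChar_one_iff_isSquare (neg_ne_zero.2 one_ne_zero)).2 hneg, map_one]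
  refine sq_eq_sq_iff_eq_or_eq_neg.1 ?_
  rw [gaussSum_sq ne_one ((quadraticChar_isQuadratic F).comp _) hψ, map_neg_one, hs, one_mul,
    Nat.cast_pow]

end QuadraticCharacter

section FieldExtension

variable {K L : Type*} [Field K] [Field L] [Algebra K L]

lemma isSquare_algebraMap_of_even_finrank [Finite L] (h : Even (Module.finrank K L)) (c : K) :
    IsSquare (algebraMap K L c) := by
  have : Fintype L := .ofFinite L
  have : Finite K := .of_injective _ (algebraMap K L).injective
  have : Fintype K := .ofFinite K
  by_cases hL : ringChar L = 2
  · exact FiniteField.isSquare_of_char_two hL _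
  rcases eq_or_ne c 0 with rfl | hc
  · simp
  obtain ⟨e, he⟩ := h
  set Q := Fintype.card K
  have card_L : Fintype.card L = Q ^ e * Q ^ e := by
    rw [Module.card_eq_pow_finrank (K := K), he, pow_add]
  have Q_pow_odd : Odd (Q ^ e) := by
    have := FiniteField.odd_card_of_char_ne_two hL
    rw [card_L, ← Nat.odd_iff, Nat.odd_mul] at this
    exact this.1
  have sub_one_dvd : Q - 1 ∣ Fintype.card L / 2 := by
    obtain ⟨m, hm⟩ := Q_pow_odd
    have half_card : Fintype.card L / 2 = (Q ^ e - 1) * (m + 1) := by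
      rw [card_L, hm, add_tsub_cancel_right, Nat.div_eq_of_lt_le] <;> ring_nf <;> omega
    rw [half_card]
    exact (by simpa using Nat.sub_dvd_pow_sub_pow Q 1 e : Q - 1 ∣ Q ^ e - 1).mul_right _
  obtain ⟨k, hk⟩ := sub_one_dvd
  rw [FiniteField.isSquare_iff hL (by simpa using hc), ← map_pow, hk, pow_mul,
    FiniteField.pow_card_sub_one_eq_one c hc, one_pow, map_one]

lemma card_filter_linearMap_sq_eq [Fintype L] [DecidableEq K] (φ : L →ₗ[K] K) {c : K} (hc : c ≠ 0)
    (hsq : IsSquare (algebraMap K L c)) :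
    #{x | φ (x ^ 2) = c} = #{x | φ (x ^ 2) = 1} := by
  obtain ⟨y, hy⟩ := hsq
  have hy₀ : y ≠ 0 := by
    rintro rfl
    simp [hc] at hy
  refine (card_equiv (Equiv.mulLeft₀ y hy₀) fun x ↦ ?_).symm
  have φ_smul : φ ((y * x) ^ 2) = c * φ (x ^ 2) := by
    rw [mul_pow, sq y, ← hy, ← Algebra.smul_def, map_smul, smul_eq_mul]
  simp [φ_smul, hc]

end FieldExtension

section Orthogonality

variable {F R : Type*} [CommRing F] [Fintype F] [CommRing R] [IsDomain R] {ψ : AddChar F R}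

lemma sum_sum_addChar [DecidableEq F] (hψ : ψ.IsPrimitive) (u v : F) :
    ∑ b, ∑ a, ψ (a * u + b * v) = if u = 0 ∧ v = 0 then (Fintype.card F : R) ^ 2 else 0 := by
  simp_rw [AddChar.map_add_eq_mul, ← sum_mul, ← mul_sum, AddChar.sum_mulShift _ hψ]
  split_ifs <;> simp_all [sq]

lemma card_filter_mul_sq_card_eq [DecidableEq F] {τ : Type*} (hψ : ψ.IsPrimitive) (T : Finset τ)
    (u v : τ → F) :
    (#{t ∈ T | u t = 0 ∧ v t = 0} : R) * Fintype.card F ^ 2 =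
      ∑ b, ∑ a, ∑ t ∈ T, ψ (a * u t + b * v t) := by
  simp_rw [sum_comm (t := T), sum_sum_addChar hψ]
  rw [← sum_filter, sum_const, nsmul_eq_mul]

end Orthogonality

section TraceCharacter

variable {p : ℕ} [Fact p.Prime] {F R : Type*} [Field F] [Algebra (ZMod p) F] [CommRing R]
  {ψ : AddChar (ZMod p) R}

/-- The additive character `x ↦ ψ (Tr x)` of `F` induced by an additive character `ψ` of the prime
field. -/
noncomputable def traceAddChar (F : Type*) [Field F] [Algebra (ZMod p) F]
    (ψ : AddChar (ZMod p) R) : AddChar F R :=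
  ψ.compAddMonoidHom (Algebra.trace (ZMod p) F).toAddMonoidHom

lemma traceAddChar_apply (x : F) : traceAddChar F ψ x = ψ (Algebra.trace (ZMod p) F x) :=
  rfl

lemma isPrimitive_traceAddChar [Finite F] (hψ : ψ.IsPrimitive) :
    (traceAddChar F ψ).IsPrimitive := by
  refine .of_ne_one (AddChar.ne_one_iff.2 ?_)
  obtain ⟨x, hx⟩ := Algebra.trace_surjective (ZMod p) F 1
  refine ⟨x, ?_⟩
  rw [traceAddChar_apply, hx, ne_eq, hψ.zmod_char_eq_one_iff]
  exact one_ne_zero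

variable [Fintype F] [IsDomain R] [CharZero R]

lemma subsetSumSeries_traceAddChar_mul (hp : Odd p) (hψ : ψ.IsPrimitive) {a : F} (ha : a ≠ 0) :
    subsetSumSeries (traceAddChar F ψ) (fun x ↦ a * x) = expSumSeries R p (Fintype.card F) 0 := by
  classical
  let φ : F →ₗ[ZMod p] ZMod p := Algebra.trace (ZMod p) F ∘ₗ LinearMap.mulLeft (ZMod p) a
  have φ_surjective : Function.Surjective φ :=
    (Algebra.trace_surjective (ZMod p) F).comp (mul_left_surjective₀ ha)
  have sum_ψ : ∑ x, ψ (φ x) = (0 : ℤ) := by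
    simpa [ha, mul_comm, φ, traceAddChar_apply] using
      AddChar.sum_mulShift a (isPrimitive_traceAddChar (F := F) hψ)
  have card_fiber (c : ZMod p) (_ : c ≠ 0) : #{x | φ x = c} = #{x | φ x = 0} :=
    AddMonoidHom.card_fiber_eq_of_mem_range φ (φ_surjective c) (φ_surjective 0)
  exact subsetSumSeries_eq_expSumSeries hp hψ φ card_fiber sum_ψ

lemma subsetSumSeries_traceAddChar_mul_sq (hp : Odd p) (hψ : ψ.IsPrimitive)
    (hF : Even (Module.finrank (ZMod p) F)) {b : F} {σ : ℤ}
    (hσ : ∑ x, traceAddChar F ψ (b * x ^ 2) = σ) :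
    subsetSumSeries (traceAddChar F ψ) (fun x ↦ b * x ^ 2) =
      expSumSeries R p (Fintype.card F) σ :=
  let φ : F →ₗ[ZMod p] ZMod p := Algebra.trace (ZMod p) F ∘ₗ LinearMap.mulLeft (ZMod p) b
  subsetSumSeries_eq_expSumSeries hp hψ (fun x ↦ φ (x ^ 2))
    (fun c hc ↦ card_filter_linearMap_sq_eq φ hc (isSquare_algebraMap_of_even_finrank hF c)) hσ

end TraceCharacter

lemma coeff_subsetSumSeries_mul_add_mul_sq {F R : Type*} [Field F] [Fintype F] [CommRing R]
    (hF : ringChar F ≠ 2) (ψ : AddChar F R) (a : F) {b : F} (hb : b ≠ 0) {n : ℕ}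
    (hn : (n : F) = 0) :
    coeff n (subsetSumSeries ψ fun x ↦ a * x + b * x ^ 2) =
      coeff n (subsetSumSeries ψ fun x ↦ b * x ^ 2) := by
  have two_ne_zero : (2 : F) ≠ 0 := Ring.two_ne_zero hF
  set d := a / (2 * b)
  have complete_square (x : F) : a * x + b * x ^ 2 = b * (x + d) ^ 2 + -(b * d ^ 2) := by
    simp only [d]
    field
  simp_rw [complete_square]
  rw [coeff_subsetSumSeries_add_const ψ (fun x ↦ b * (x + d) ^ 2), nsmul_eq_mul, hn, zero_mul,
    AddChar.map_zero_eq_one, mul_one]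
  exact congrArg _ (subsetSumSeries_comp_equiv ψ (fun x ↦ b * x ^ 2) (Equiv.addRight d))

lemma natCard_subsets_mul_card_sq {F R : Type*} [CommRing F] [Fintype F] [CommRing R] [IsDomain R]
    {ψ : AddChar F R} (hψ : ψ.IsPrimitive) (n : ℕ) :
    (Nat.card {S : Finset F // #S = n ∧ ∑ x ∈ S, x = 0 ∧ ∑ x ∈ S, x ^ 2 = 0} : R) *
        Fintype.card F ^ 2 =
      ∑ b, ∑ a, coeff n (subsetSumSeries ψ fun x ↦ a * x + b * x ^ 2) := by
  classical
  have card_filter : Nat.card {S : Finset F // #S = n ∧ ∑ x ∈ S, x = 0 ∧ ∑ x ∈ S, x ^ 2 = 0} =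
      #{S ∈ powersetCard n (univ : Finset F) | ∑ x ∈ S, x = 0 ∧ ∑ x ∈ S, x ^ 2 = 0} :=
    Nat.subtype_card _ (by simp [mem_powersetCard])
  rw [card_filter, card_filter_mul_sq_card_eq hψ]
  simp_rw [coeff_subsetSumSeries, sum_add_distrib, mul_sum]

lemma ringChar_ne_two_of_odd {p : ℕ} [Fact p.Prime] (hp : Odd p) (F : Type*) [CommRing F]
    [Nontrivial F] [Algebra (ZMod p) F] : ringChar F ≠ 2 := by
  rw [← Algebra.ringChar_eq (ZMod p) F, ZMod.ringChar_zmod_n]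
  rintro rfl
  exact absurd hp (by decide)

section CountingSubsets

variable {p : ℕ} [Fact p.Prime] {F R : Type*} [Field F] [Fintype F] [Algebra (ZMod p) F]
  [CommRing R] [IsDomain R] [CharZero R] {ψ : AddChar (ZMod p) R}

lemma sum_coeff_subsetSumSeries_mul (hp : Odd p) (hψ : ψ.IsPrimitive) {n : ℕ} (hn : p ∣ n) :
    ∑ a, coeff n (subsetSumSeries (traceAddChar F ψ) fun x ↦ a * x) =
      (Fintype.card F).choose n +
        (Fintype.card F - 1) * ((Fintype.card F / p).choose (n / p) : R) := by
  classical
  have term_eq (a : F) (ha : a ∈ ({0}ᶜ : Finset F)) :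
      coeff n (subsetSumSeries (traceAddChar F ψ) fun x ↦ a * x) =
        ((Fintype.card F / p).choose (n / p) : R) := by
    rw [subsetSumSeries_traceAddChar_mul hp hψ (by simpa using ha),
      coeff_expSumSeries_zero_of_dvd hp.pos hn]
  rw [Fintype.sum_eq_add_sum_compl 0, sum_congr rfl term_eq, sum_const, card_compl, card_singleton,
    nsmul_eq_mul, Nat.cast_pred Fintype.card_pos]
  simp_rw [zero_mul, coeff_subsetSumSeries_zero]

lemma two_mul_sum_coeff_subsetSumSeries_mul_sq [DecidableEq F] (hp : Odd p) (hψ : ψ.IsPrimitive)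
    (hF : Even (Module.finrank (ZMod p) F)) {s : ℕ} (hs : Fintype.card F = s ^ 2) (n : ℕ) :
    2 * ∑ b ∈ {(0 : F)}ᶜ, coeff n (subsetSumSeries (traceAddChar F ψ) fun x ↦ b * x ^ 2) =
      (Fintype.card F - 1) *
        (coeff n (expSumSeries R p (Fintype.card F) s) +
          coeff n (expSumSeries R p (Fintype.card F) (-s))) := by
  have hF₂ := ringChar_ne_two_of_odd hp F
  have hψF := isPrimitive_traceAddChar (F := F) hψ
  have neg_one_isSquare : IsSquare (-1 : F) := by
    simpa using isSquare_algebraMap_of_even_finrank (L := F) hF (-1 : ZMod p)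
  obtain ⟨g, gaussSum_eq, g_eq⟩ :
      ∃ g : ℤ, gaussSum (quadraticCharIn F R) (traceAddChar F ψ) = g ∧ (g = s ∨ g = -s) := by
    rcases gaussSum_quadraticCharIn_eq_or_eq_neg hF₂ hψF neg_one_isSquare hs with h | h
    · exact ⟨s, by simpa using h, .inl rfl⟩
    · exact ⟨-s, by simpa using h, .inr rfl⟩
  have term_eq (b : F) (hb : b ∈ ({0}ᶜ : Finset F)) :
      coeff n (subsetSumSeries (traceAddChar F ψ) fun x ↦ b * x ^ 2) =
        coeff n (expSumSeries R p (Fintype.card F) (quadraticChar F b * g)) := by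
    rw [subsetSumSeries_traceAddChar_mul_sq hp hψ hF]
    rw [sum_addChar_mul_sq hF₂ hψF (by simpa using hb), gaussSum_eq, Int.cast_mul]
  -- The sign of `g` is immaterial: both `g` and `-g` occur in the sum.
  have sum_over_signs := two_nsmul_sum_comp_quadraticChar hF₂ fun t ↦
    coeff n (expSumSeries R p (Fintype.card F) (t * g))
  rw [sum_congr rfl term_eq, ← Nat.cast_ofNat, ← nsmul_eq_mul, sum_over_signs, nsmul_eq_mul,
    Nat.cast_pred Fintype.card_pos]
  rcases g_eq with rfl | rfl <;> simp [add_comm]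

lemma two_mul_natCard_subsets_mul_card_sq (hp : Odd p) (hψ : ψ.IsPrimitive)
    (hF : Even (Module.finrank (ZMod p) F)) {s : ℕ} (hs : Fintype.card F = s ^ 2) {n : ℕ}
    (hn : p ∣ n) :
    2 * ((Nat.card {S : Finset F // #S = n ∧ ∑ x ∈ S, x = 0 ∧ ∑ x ∈ S, x ^ 2 = 0} : R) *
        Fintype.card F ^ 2) =
      2 * ((Fintype.card F).choose n +
        (Fintype.card F - 1) * (Fintype.card F / p).choose (n / p)) +
      Fintype.card F * ((Fintype.card F - 1) *
        (coeff n (expSumSeries R p (Fintype.card F) s) +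
          coeff n (expSumSeries R p (Fintype.card F) (-s)))) := by
  classical
  have n_eq_zero : (n : F) = 0 := by
    rw [← map_natCast (algebraMap (ZMod p) F), (ZMod.natCast_eq_zero_iff n p).2 hn, map_zero]
  have sum_over_a (b : F) (hb : b ∈ ({0}ᶜ : Finset F)) :
      ∑ a, coeff n (subsetSumSeries (traceAddChar F ψ) fun x ↦ a * x + b * x ^ 2) =
        Fintype.card F * coeff n (subsetSumSeries (traceAddChar F ψ) fun x ↦ b * x ^ 2) := by
    rw [← card_univ, ← nsmul_eq_mul, ← sum_const]
    exact sum_congr rfl fun a _ ↦ coeff_subsetSumSeries_mul_add_mul_sq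
      (ringChar_ne_two_of_odd hp F) _ a (by simpa using hb) n_eq_zero
  rw [natCard_subsets_mul_card_sq (isPrimitive_traceAddChar hψ), Fintype.sum_eq_add_sum_compl 0,
    sum_congr rfl sum_over_a, ← mul_sum, ← two_mul_sum_coeff_subsetSumSeries_mul_sq hp hψ hF hs,
    ← sum_coeff_subsetSumSeries_mul hp hψ hn]
  simp_rw [zero_mul, add_zero]
  ring

end CountingSubsets

theorem stmt_18 (p e q s n : ℕ) (hp : p.Prime) (hodd : Odd p) (he : 0 < e)
    (hq : q = p ^ (2 * e)) (hs : s = p ^ e)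
    (F : Type*) [Field F] [Fintype F] (hF : Fintype.card F = q)
    (hn1 : 1 ≤ n) (hnq : n ≤ q) (hpn : p ∣ n) :
    (Nat.card {S : Finset F //
        S.card = n ∧ (∑ x ∈ S, x) = 0 ∧ (∑ x ∈ S, x ^ 2) = 0} : ℚ)
      = (1 / (q : ℚ) ^ 2) * (q.choose n)
        + (((q : ℚ) - 1) / (q : ℚ) ^ 2) * ((q / p).choose (n / p))
        + (((q : ℚ) - 1) / (2 * (q : ℚ))) *
          ((∑ ij ∈ (Finset.range (n + 1) ×ˢ Finset.range (n + 1)).filter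
              (fun ij => ij.1 + p * ij.2 = n ∧ ij.1 ≤ s),
            ((s.choose ij.1 : ℚ) * (((q - s) / p).choose ij.2 : ℚ)))
          + (-1 : ℚ) ^ n *
            ∑ ij ∈ (Finset.range (n + 1) ×ˢ Finset.range (n + 1)).filter
                (fun ij => ij.1 + p * ij.2 = n),
              (-1 : ℚ) ^ ij.2 * ((s - 1 + ij.1).choose (s - 1) : ℚ)
                * (((q + s) / p).choose ij.2 : ℚ)) := by
  have : Fact p.Prime := ⟨hp⟩
  have : CharP F p := charP_of_card_eq_prime_pow (hF.trans hq)
  let _ : Algebra (ZMod p) F := ZMod.algebra F p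
  have card_eq : Fintype.card F = s ^ 2 := by rw [hF, hq, hs, ← pow_mul, mul_comm]
  have finrank_eq : Module.finrank (ZMod p) F = 2 * e := by
    refine Nat.pow_right_injective hp.two_le (Eq.trans ?_ (hF.trans hq))
    rw [Module.card_eq_pow_finrank (K := ZMod p), ZMod.card]
  have hs_pos : 0 < s := hs ▸ pow_pos hp.pos e
  have hs_le : s ≤ q := by
    rw [← hF, card_eq]
    exact Nat.le_self_pow two_ne_zero s
  have count := two_mul_natCard_subsets_mul_card_sq (F := F) hodd
    (ZMod.isPrimitive_stdAddChar p) (finrank_eq ▸ even_two_mul e) card_eq hpn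
  rw [hF, coeff_expSumSeries_natCast hp.pos hs_le, coeff_expSumSeries_neg hodd hs_pos] at count
  have q_ne_zero : (q : ℚ) ≠ 0 := mod_cast (hs_pos.trans_le hs_le).ne'
  field_simp
  rw [← Rat.cast_inj (α := ℂ)]
  push_cast
  linear_combination count
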